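/- Let Γ be a finitely generated non-amenable group, μ_0 a probability measure with finite entropy whose support generates Γ, and λ ↦ μ_λ a curve of probability measures with log μ_λ(a) = log μ_0(a) + λν(a) + λo_λ(a), ν bounded and o_λ → 0 uniformly. Suppose ℓ(μ_λ; d_G^α) ≤ L for all 0 ≤ λ, α ≤ 1 (uniform boundedness of rates of escape in Green metrics). Then lim_{λ→0+} (1/λ)·(h(μ_λ) − ℓ(μ_λ; d_G^0)) = 0. -/

import Mathlib

/-!
Write `h(λ) = h(μ_λ)` and `ℓ_α(λ) = ℓ(μ_λ; d_G^α)`. Two inequalities carry the proof.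

*Fundamental inequality.* Whenever the powers of `μ_α` decay exponentially, `h(λ) ≤ ℓ_α(λ)`
(`asympEntropy_le_escape`). The Green function of `μ_α` satisfies `∑ₓ G(x)^(1+δ) < ∞` for every
`δ > 0` (`SpecBound.tsum_green_rpow_ne_top`), so Gibbs' inequality for `μ_λⁿ` against `G^(1+δ)`
gives `H(μ_λⁿ) ≤ (1+δ) ∑ₓ d_G^α(1,x) μ_λⁿ(x) + C_δ`; divide by `n`, then let `δ → 0`.

*Interpolation.* Since `λ` is the midpoint of `0` and `2λ`, the linear terms of the expansion
cancel and `μ_λ² ≤ e^c μ_0 μ_{2λ}` with `c = o(λ)`. By Cauchy–Schwarz this passes to convolution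
powers with constant `e^{nc}` (`convPow_sq_le`). Bounding the powers of `μ_0` and `μ_{2λ}` by their
Green functions and taking logarithms gives `ℓ_0(λ) + ℓ_{2λ}(λ) ≤ 2 h(λ) + c`.

With the fundamental inequality for `α = 0` and `α = 2λ`, these force `0 ≤ ℓ_0(λ) - h(λ) ≤ c`
(`abs_asympEntropy_sub_escape_le`), and `c = o(λ)`. In effect `α ↦ ℓ_α(λ)` is nearly concave along
the curve, bounded below by `h(λ)`, and equal to `h(λ)` at the interior point `α = λ`.

That infima over `n` are limits follows from Fekete's lemma; for the Green moments it rests on the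
triangle inequality `greenE_mul_le`.
-/

open MeasureTheory Filter Topology
open scoped ENNReal

/-- Convolution of two (densities of) measures on a group. -/
noncomputable def conv {Γ : Type*} [Group Γ] (μ ν : Γ → ℝ) : Γ → ℝ :=
  fun x => ∑' y : Γ, μ y * ν (y⁻¹ * x)

open Classical in
/-- n-th convolution power, with `convPow μ 0` the Dirac mass at the identity. -/
noncomputable def convPow {Γ : Type*} [Group Γ] (μ : Γ → ℝ) : ℕ → Γ → ℝ
  | 0 => fun x => if x = 1 then 1 else 0
  | n + 1 => conv (convPow μ n) μ

/-- Entropy `H(μ) = ∑_x (-log μ(x)) μ(x)` (valued in `ℝ≥0∞`; terms with `μ x = 0` vanish). -/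
noncomputable def entropy {Γ : Type*} (μ : Γ → ℝ) : ℝ≥0∞ :=
  ∑' x : Γ, ENNReal.ofReal (-(Real.log (μ x)) * μ x)

/-- Green function `G(x) = ∑_n μⁿ(x)`. -/
noncomputable def green {Γ : Type*} [Group Γ] (μ : Γ → ℝ) (x : Γ) : ℝ :=
  ∑' n : ℕ, convPow μ n x

/-- Green metric `d_G(x,y) = log G(id) − log G(x⁻¹y)`. -/
noncomputable def greenDist {Γ : Type*} [Group Γ] (μ : Γ → ℝ) (x y : Γ) : ℝ :=
  Real.log (green μ 1) - Real.log (green μ (x⁻¹ * y))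

/-- First moment of `μ` in the metric `d`, valued in `ℝ≥0∞`. -/
noncomputable def momentE {Γ : Type*} [Group Γ] (d : Γ → Γ → ℝ) (μ : Γ → ℝ) : ℝ≥0∞ :=
  ∑' x : Γ, ENNReal.ofReal (d 1 x) * ENNReal.ofReal (μ x)

/-- Rate of escape of `μ` in the metric `d`, as the infimum (= limit, by subadditivity)
of `(1/n) ∑_x d(id,x) μⁿ(x)`. -/
noncomputable def escape {Γ : Type*} [Group Γ] (d : Γ → Γ → ℝ) (μ : Γ → ℝ) : ℝ :=
  ⨅ n : ℕ+, (momentE d (convPow μ (n : ℕ))).toReal / (n : ℕ)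

/-- Asymptotic entropy of `μ`, as the infimum (= limit, by subadditivity) of `H(μⁿ)/n`. -/
noncomputable def asympEntropy {Γ : Type*} [Group Γ] (μ : Γ → ℝ) : ℝ :=
  ⨅ n : ℕ+, (entropy (convPow μ (n : ℕ))).toReal / (n : ℕ)

namespace GreenEntropy

/-! ### Convolution powers and expectations along the random walk -/

/-- `m` is (the density of) a probability measure on `Γ`. -/
structure IsProb {Γ : Type*} (m : Γ → ℝ) : Prop where
  nonneg : ∀ x, 0 ≤ m x
  hasSum : HasSum m 1

/-- The expectation of `f` at time `n` of the `m`-random walk started at the identity, that is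
`∑ₓ mⁿ(x) f(x)`. Values are taken in `ℝ≥0∞`, so that sums may be exchanged freely. -/
noncomputable def expect {Γ : Type*} [Group Γ] (m : Γ → ℝ) (n : ℕ) (f : Γ → ℝ≥0∞) : ℝ≥0∞ :=
  ∑' x, ENNReal.ofReal (convPow m n x) * f x

section
variable {Γ : Type*}

lemma IsProb.tsum_ofReal {p : Γ → ℝ} (hp : IsProb p) : ∑' x, ENNReal.ofReal (p x) = 1 := by
  rw [← ENNReal.ofReal_tsum_of_nonneg hp.nonneg hp.hasSum.summable, hp.hasSum.tsum_eq,
    ENNReal.ofReal_one]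

lemma IsProb.of_tsum {p : Γ → ℝ} (h0 : ∀ x, 0 ≤ p x) (h1 : ∑' x, ENNReal.ofReal (p x) = 1) :
    IsProb p := by
  refine ⟨h0, ?_⟩
  have h2 := ENNReal.hasSum_toReal (f := fun x => ENNReal.ofReal (p x)) (by rw [h1]; simp)
  rw [← ENNReal.tsum_toReal_eq (fun x => ENNReal.ofReal_ne_top), h1] at h2
  simpa [ENNReal.toReal_ofReal (h0 _)] using h2

lemma IsProb.le_one {p : Γ → ℝ} (hp : IsProb p) (x : Γ) : p x ≤ 1 :=
  le_hasSum hp.hasSum x fun y _ => hp.nonneg y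

variable [Group Γ]

lemma summable_conv {p q : Γ → ℝ} (hp : IsProb p) (hq : IsProb q) (x : Γ) :
    Summable fun y => p y * q (y⁻¹ * x) :=
  Summable.of_nonneg_of_le (fun _ => mul_nonneg (hp.nonneg _) (hq.nonneg _))
    (fun y => mul_le_of_le_one_right (hp.nonneg y) (hq.le_one _)) hp.hasSum.summable

lemma ofReal_conv {p q : Γ → ℝ} (hp : IsProb p) (hq : IsProb q) (x : Γ) :
    ENNReal.ofReal (conv p q x) =
      ∑' y, ENNReal.ofReal (p y) * ENNReal.ofReal (q (y⁻¹ * x)) := by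
  rw [conv, ENNReal.ofReal_tsum_of_nonneg (fun y => mul_nonneg (hp.nonneg _) (hq.nonneg _))
    (summable_conv hp hq x)]
  simp_rw [ENNReal.ofReal_mul (hp.nonneg _)]

lemma tsum_conv_mul {p q : Γ → ℝ} (hp : IsProb p) (hq : IsProb q) (f : Γ → ℝ≥0∞) :
    ∑' x, ENNReal.ofReal (conv p q x) * f x =
      ∑' y, ENNReal.ofReal (p y) * ∑' s, ENNReal.ofReal (q s) * f (y * s) := by
  simp_rw [ofReal_conv hp hq, ← ENNReal.tsum_mul_right]
  rw [ENNReal.tsum_comm]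
  refine tsum_congr fun y => ?_
  rw [← (Equiv.mulLeft y).tsum_eq, ← ENNReal.tsum_mul_left]
  simp [mul_assoc]

lemma IsProb.conv {p q : Γ → ℝ} (hp : IsProb p) (hq : IsProb q) : IsProb (conv p q) := by
  refine .of_tsum (fun x => tsum_nonneg fun y => mul_nonneg (hp.nonneg _) (hq.nonneg _)) ?_
  have := tsum_conv_mul hp hq fun _ => 1
  simpa [hp.tsum_ofReal, hq.tsum_ofReal] using this

lemma IsProb.convPow {m : Γ → ℝ} (hm : IsProb m) : ∀ n, IsProb (convPow m n)
  | 0 => by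
    classical
    refine ⟨fun x => ?_, ?_⟩
    · simp only [_root_.convPow]; split_ifs <;> norm_num
    · exact hasSum_ite_eq 1 1
  | n + 1 => (hm.convPow n).conv hm

lemma expect_zero (m : Γ → ℝ) (f : Γ → ℝ≥0∞) : expect m 0 f = f 1 := by
  classical
  rw [expect, tsum_eq_single 1]
  · simp [convPow]
  · intro x hx; simp [convPow, hx]

lemma expect_succ {m : Γ → ℝ} (hm : IsProb m) (n : ℕ) (f : Γ → ℝ≥0∞) :
    expect m (n + 1) f = expect m n fun x => ∑' s, ENNReal.ofReal (m s) * f (x * s) :=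
  tsum_conv_mul (hm.convPow n) hm f

/-- Markov property: position `n + k` is a product of independent positions `n` and `k`. -/
lemma expect_add {m : Γ → ℝ} (hm : IsProb m) (n k : ℕ) (f : Γ → ℝ≥0∞) :
    expect m (n + k) f = expect m n fun x => expect m k fun y => f (x * y) := by
  induction k generalizing f with
  | zero => simp [expect_zero]
  | succ k ih =>
    rw [← add_assoc, expect_succ hm, ih]
    simp_rw [expect_succ hm, mul_assoc]

lemma expect_const {m : Γ → ℝ} (hm : IsProb m) (n : ℕ) (c : ℝ≥0∞) :
    expect m n (fun _ => c) = c := by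
  rw [expect, ENNReal.tsum_mul_right, (hm.convPow n).tsum_ofReal, one_mul]

lemma expect_add_fun (m : Γ → ℝ) (n : ℕ) (f g : Γ → ℝ≥0∞) :
    expect m n (fun x => f x + g x) = expect m n f + expect m n g := by
  simp_rw [expect, mul_add]; exact ENNReal.tsum_add

lemma expect_mono {m : Γ → ℝ} (n : ℕ) {f g : Γ → ℝ≥0∞}
    (h : ∀ x, 0 < convPow m n x → f x ≤ g x) : expect m n f ≤ expect m n g := by
  refine ENNReal.tsum_le_tsum fun x => ?_
  by_cases hx : 0 < convPow m n x
  · exact mul_le_mul_right (h x hx) _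
  · simp [ENNReal.ofReal_of_nonpos (not_lt.1 hx)]

/-- Common source of the subadditivity of `n ↦ H(mⁿ)` and of `n ↦ ∑ₓ d(1,x) mⁿ(x)`: only a
pointwise triangle inequality on the supports is needed. -/
lemma expect_subadd {m : Γ → ℝ} (hm : IsProb m) (n k : ℕ) {f g h : Γ → ℝ≥0∞}
    (H : ∀ x y, 0 < convPow m n x → 0 < convPow m k y → f (x * y) ≤ g x + h y) :
    expect m (n + k) f ≤ expect m n g + expect m k h := by
  rw [expect_add hm]
  calc _ ≤ expect m n fun x => g x + expect m k h := by
        refine expect_mono n fun x hx => ?_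
        rw [← expect_const hm k (g x), ← expect_add_fun]
        exact expect_mono k fun y hy => H x y hx hy
    _ = _ := by rw [expect_add_fun, expect_const hm]

lemma convPow_mul_le {m : Γ → ℝ} (hm : IsProb m) (n k : ℕ) (x y : Γ) :
    convPow m n x * convPow m k y ≤ convPow m (n + k) (x * y) := by
  classical
  -- A point mass is the expectation of an indicator, so the Markov property applies.
  have key : ∀ j z, ENNReal.ofReal (convPow m j z) =
      expect m j (fun w => if w = z then 1 else 0) := by
    intro j z
    rw [expect, tsum_eq_single z]
    · simp
    · intro w hw; simp [hw]
  rw [← ENNReal.ofReal_le_ofReal_iff ((hm.convPow _).nonneg _),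
    ENNReal.ofReal_mul ((hm.convPow _).nonneg _), key (n + k), expect_add hm]
  rw [expect]
  refine le_trans ?_ (ENNReal.le_tsum x)
  simp only [mul_right_inj, ← key]
  exact le_rfl

/-! ### Entropy and moments of convolution powers -/

lemma entropy_convPow {m : Γ → ℝ} (hm : IsProb m) (n : ℕ) :
    entropy (convPow m n) = expect m n fun x => ENNReal.ofReal (-Real.log (convPow m n x)) := by
  refine tsum_congr fun x => ?_
  rw [ENNReal.ofReal_mul' ((hm.convPow n).nonneg x), mul_comm]

lemma momentE_convPow (d : Γ → Γ → ℝ) (m : Γ → ℝ) (n : ℕ) :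
    momentE d (convPow m n) = expect m n fun x => ENNReal.ofReal (d 1 x) :=
  tsum_congr fun _ => mul_comm _ _

/-- Subadditivity of entropy, in the form `-log mⁿ⁺ᵏ(xy) ≤ -log mⁿ(x) - log mᵏ(y)`. -/
lemma entropy_add_le {m : Γ → ℝ} (hm : IsProb m) (n k : ℕ) :
    entropy (convPow m (n + k)) ≤ entropy (convPow m n) + entropy (convPow m k) := by
  simp only [entropy_convPow hm]
  refine expect_subadd hm n k fun x y hx hy => ?_
  refine le_trans (ENNReal.ofReal_le_ofReal ?_) ENNReal.ofReal_add_le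
  have h1 := Real.log_le_log (mul_pos hx hy) (convPow_mul_le hm n k x y)
  rw [Real.log_mul hx.ne' hy.ne'] at h1
  linarith

lemma convPow_one {m : Γ → ℝ} : convPow m 1 = m := by
  classical
  funext x
  change ∑' y, _ = _
  rw [tsum_eq_single 1]
  · simp [convPow]
  · intro y hy; simp [convPow, hy]

lemma entropy_ne_top {m : Γ → ℝ} (hm : IsProb m) (hent : entropy m ≠ ⊤) (n : ℕ) :
    entropy (convPow m n) ≠ ⊤ := by
  induction n with
  | zero => rw [entropy_convPow hm, expect_zero]; exact ENNReal.ofReal_ne_top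
  | succ n ih =>
    refine ne_top_of_le_ne_top (ENNReal.add_ne_top.2 ⟨ih, ?_⟩) (entropy_add_le hm n 1)
    rwa [convPow_one]

/-- Fekete's lemma, with the infimum indexed by `ℕ+` as in `escape` and `asympEntropy`. -/
lemma tendsto_iInf_of_subadditive {u : ℕ → ℝ} (h : Subadditive u) (h0 : ∀ n, 0 ≤ u n) :
    Tendsto (fun n : ℕ => u n / n) atTop (𝓝 (⨅ n : ℕ+, u n / (n : ℕ))) := by
  have := h.tendsto_lim ⟨0, by rintro _ ⟨n, rfl⟩; exact div_nonneg (h0 n) n.cast_nonneg⟩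
  convert this using 2
  rw [Subadditive.lim, iInf]
  congr 1
  ext r
  constructor
  · rintro ⟨n, rfl⟩; exact ⟨n, n.2, rfl⟩
  · rintro ⟨n, hn, rfl⟩; exact ⟨⟨n, hn⟩, rfl⟩

end

/-! ### The Green function and the triangle inequality for the Green metric -/

section
variable {Γ : Type*} [Group Γ]

/-- The Green function with values in `ℝ≥0∞`; it agrees with `green` when the series converges
(see `SpecBound.greenE_eq`), but its basic inequalities hold without any convergence. -/
noncomputable def greenE (a : Γ → ℝ) (x : Γ) : ℝ≥0∞ := ∑' n, ENNReal.ofReal (convPow a n x)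

lemma one_le_greenE_one (a : Γ → ℝ) : 1 ≤ greenE a 1 := by
  refine le_trans ?_ (ENNReal.le_tsum 0)
  simp [convPow]

/-- The Green function is the potential of the Dirac mass at the identity: `G = δ₁ + G * a`. -/
lemma greenE_eq {a : Γ → ℝ} (ha : IsProb a) (x : Γ) :
    greenE a x = ENNReal.ofReal (convPow a 0 x) +
      ∑' w, greenE a w * ENNReal.ofReal (a (w⁻¹ * x)) := by
  rw [greenE, tsum_eq_zero_add' ENNReal.summable]
  simp_rw [greenE, ← ENNReal.tsum_mul_right]
  rw [ENNReal.tsum_comm]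
  congr 1
  exact tsum_congr fun n => ofReal_conv (ha.convPow n) ha x

/-- The truncated form of `greenE_eq`, away from the identity. -/
lemma partial_succ {a : Γ → ℝ} (ha : IsProb a) (N : ℕ) {x : Γ} (hx : x ≠ 1) :
    ∑ n ∈ Finset.range (N + 1), ENNReal.ofReal (convPow a n x) =
      ∑' w, (∑ n ∈ Finset.range N, ENNReal.ofReal (convPow a n w)) *
        ENNReal.ofReal (a (w⁻¹ * x)) := by
  simp_rw [Finset.sum_range_succ', Finset.sum_mul]
  rw [Summable.tsum_finsetSum fun _ _ => ENNReal.summable]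
  simp only [convPow, hx, if_false, ENNReal.ofReal_zero, add_zero]
  exact Finset.sum_congr rfl fun n _ => ofReal_conv (ha.convPow n) ha x

lemma greenE_le_of_partial {a : Γ → ℝ} {x : Γ} {c C : ℝ≥0∞}
    (h : ∀ N, c * ∑ n ∈ Finset.range N, ENNReal.ofReal (convPow a n x) ≤ C) :
    c * greenE a x ≤ C := by
  rw [greenE, ← ENNReal.tsum_mul_left, ENNReal.tsum_eq_iSup_nat]
  refine iSup_le fun N => ?_
  rw [← Finset.mul_sum]
  exact h N

/-- Maximum principle: by induction on the truncation, `G ≤ G(1)` propagates from the identity,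
where it is trivial, since off the identity the truncation is an average of the previous one. -/
lemma greenE_le_one {a : Γ → ℝ} (ha : IsProb a) (x : Γ) : greenE a x ≤ greenE a 1 := by
  rw [← one_mul (greenE a x)]
  refine greenE_le_of_partial fun N => ?_
  rw [one_mul]
  induction N generalizing x with
  | zero => simp
  | succ N ih =>
    by_cases hx : x = 1
    · subst hx; exact ENNReal.sum_le_tsum _
    · rw [partial_succ ha N hx]
      calc _ ≤ ∑' w, greenE a 1 * ENNReal.ofReal (a (w⁻¹ * x)) :=
            ENNReal.tsum_le_tsum fun w => mul_le_mul_left (ih w) _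
        _ = greenE a 1 := by
            have e := ((Equiv.inv Γ).trans (Equiv.mulRight x)).tsum_eq
              fun s => ENNReal.ofReal (a s)
            simp only [Equiv.trans_apply, Equiv.inv_apply, Equiv.coe_mulRight] at e
            rw [ENNReal.tsum_mul_left, e, ha.tsum_ofReal, mul_one]

/-- The triangle inequality for the Green metric, by the same induction as `greenE_le_one`: the
case `x = 1` is trivial, and elsewhere `x ↦ G(yx)` dominates its average. -/
lemma greenE_mul_le {a : Γ → ℝ} (ha : IsProb a) (y x : Γ) :
    greenE a y * greenE a x ≤ greenE a 1 * greenE a (y * x) := by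
  refine greenE_le_of_partial fun N => ?_
  induction N generalizing x with
  | zero => simp
  | succ N ih =>
    by_cases hx : x = 1
    · subst hx
      rw [mul_one, mul_comm]
      exact mul_le_mul_left (ENNReal.sum_le_tsum _) _
    · rw [partial_succ ha N hx, ← ENNReal.tsum_mul_left]
      calc _ ≤ ∑' w, greenE a 1 * (greenE a (y * w) * ENNReal.ofReal (a (w⁻¹ * x))) := by
            refine ENNReal.tsum_le_tsum fun w => ?_
            rw [← mul_assoc, ← mul_assoc]
            exact mul_le_mul_left (ih w) _
        _ = greenE a 1 * ∑' w, greenE a w * ENNReal.ofReal (a (w⁻¹ * (y * x))) := by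
            rw [ENNReal.tsum_mul_left, ← (Equiv.mulLeft y).tsum_eq fun w =>
              greenE a w * ENNReal.ofReal (a (w⁻¹ * (y * x)))]
            simp [mul_assoc]
        _ ≤ _ := by
            rw [greenE_eq ha (y * x)]
            exact mul_le_mul_right le_add_self _

/-- `a` is a probability measure whose convolution powers decay exponentially, uniformly on the
group. The rate is written `σ²` so that `aᵏ aʲ` can be bounded by the product `σᵏ σʲ`. -/
structure SpecBound (a : Γ → ℝ) (σ : ℝ) : Prop where
  prob : IsProb a
  pos : 0 < σ
  lt_one : σ < 1
  le : ∀ n x, convPow a n x ≤ (σ ^ n) ^ 2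

variable {a : Γ → ℝ} {σ : ℝ}

lemma SpecBound.le' (h : SpecBound a σ) (n : ℕ) (x : Γ) : convPow a n x ≤ σ ^ n := by
  refine (h.le n x).trans ?_
  have := pow_le_one₀ h.pos.le h.lt_one.le (n := n)
  have := pow_pos h.pos n
  nlinarith

lemma SpecBound.summable (h : SpecBound a σ) (x : Γ) : Summable fun n => convPow a n x :=
  Summable.of_nonneg_of_le (fun n => (h.prob.convPow n).nonneg x) (fun n => h.le' n x)
    (summable_geometric_of_lt_one h.pos.le h.lt_one)

lemma SpecBound.greenE_eq (h : SpecBound a σ) (x : Γ) : greenE a x = ENNReal.ofReal (green a x) :=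
  (ENNReal.ofReal_tsum_of_nonneg (fun n => (h.prob.convPow n).nonneg x) (h.summable x)).symm

lemma SpecBound.green_nonneg (h : SpecBound a σ) (x : Γ) : 0 ≤ green a x :=
  tsum_nonneg fun n => (h.prob.convPow n).nonneg x

lemma SpecBound.convPow_le_green (h : SpecBound a σ) (n : ℕ) (x : Γ) :
    convPow a n x ≤ green a x :=
  (h.summable x).le_tsum n fun k _ => (h.prob.convPow k).nonneg x

lemma SpecBound.one_le_green (h : SpecBound a σ) : 1 ≤ green a 1 := by
  simpa [convPow] using h.convPow_le_green 0 1

lemma SpecBound.green_le (h : SpecBound a σ) (x : Γ) : green a x ≤ green a 1 := by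
  have := greenE_le_one h.prob x
  rwa [h.greenE_eq, h.greenE_eq, ENNReal.ofReal_le_ofReal_iff (h.green_nonneg 1)] at this

lemma SpecBound.green_mul_le (h : SpecBound a σ) (x y : Γ) :
    green a x * green a y ≤ green a 1 * green a (x * y) := by
  have := greenE_mul_le h.prob x y
  rwa [h.greenE_eq, h.greenE_eq, h.greenE_eq, h.greenE_eq, ← ENNReal.ofReal_mul (h.green_nonneg _),
    ← ENNReal.ofReal_mul (h.green_nonneg _),
    ENNReal.ofReal_le_ofReal_iff (mul_nonneg (h.green_nonneg _) (h.green_nonneg _))] at this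

lemma SpecBound.greenDist_nonneg (h : SpecBound a σ) (x : Γ) : 0 ≤ greenDist a 1 x := by
  simp only [greenDist, inv_one, one_mul]
  rcases (h.green_nonneg x).eq_or_lt with h0 | h0
  · rw [← h0, Real.log_zero, sub_zero]; exact Real.log_nonneg h.one_le_green
  · exact sub_nonneg.2 (Real.log_le_log h0 (h.green_le x))

lemma SpecBound.greenDist_triangle (h : SpecBound a σ) {x y : Γ} (hx : 0 < green a x)
    (hy : 0 < green a y) :
    greenDist a 1 (x * y) ≤ greenDist a 1 x + greenDist a 1 y := by
  simp only [greenDist, inv_one, one_mul]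
  have h1 := Real.log_le_log (mul_pos hx hy) (h.green_mul_le x y)
  have h3 : 0 < green a 1 := lt_of_lt_of_le one_pos h.one_le_green
  have h2 : 0 < green a (x * y) :=
    pos_of_mul_pos_right (lt_of_lt_of_le (mul_pos hx hy) (h.green_mul_le x y)) h3.le
  rw [Real.log_mul hx.ne' hy.ne', Real.log_mul h3.ne' h2.ne'] at h1
  linarith

/-! ### Summability of powers of the Green function -/

/-- The mean of the Green function at time `k` decays exponentially: `∑ₓ aᵏ(x) aʲ(x)` is at most
`sup aᵏ` and at most `sup aʲ`, hence at most `σᵏ σʲ`. -/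
lemma SpecBound.expect_greenE_le (h : SpecBound a σ) (k : ℕ) :
    expect a k (greenE a) ≤ ENNReal.ofReal (σ ^ k / (1 - σ)) := by
  have hσ := h.pos.le
  have key : ∀ j, ∑' x, ENNReal.ofReal (convPow a k x) * ENNReal.ofReal (convPow a j x) ≤
      ENNReal.ofReal (σ ^ k * σ ^ j) := by
    intro j
    rcases le_total k j with hkj | hkj
    · calc _ ≤ ∑' x, ENNReal.ofReal (convPow a k x) * ENNReal.ofReal ((σ ^ j) ^ 2) :=
            ENNReal.tsum_le_tsum fun x =>
              mul_le_mul_right (ENNReal.ofReal_le_ofReal (h.le j x)) _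
        _ = ENNReal.ofReal ((σ ^ j) ^ 2) := by
            rw [ENNReal.tsum_mul_right, (h.prob.convPow k).tsum_ofReal, one_mul]
        _ ≤ _ := by
            refine ENNReal.ofReal_le_ofReal ?_
            rw [sq]
            have := pow_le_pow_of_le_one hσ h.lt_one.le hkj
            gcongr
    · calc _ ≤ ∑' x, ENNReal.ofReal ((σ ^ k) ^ 2) * ENNReal.ofReal (convPow a j x) :=
            ENNReal.tsum_le_tsum fun x =>
              mul_le_mul_left (ENNReal.ofReal_le_ofReal (h.le k x)) _
        _ = ENNReal.ofReal ((σ ^ k) ^ 2) := by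
            rw [ENNReal.tsum_mul_left, (h.prob.convPow j).tsum_ofReal, mul_one]
        _ ≤ _ := by
            refine ENNReal.ofReal_le_ofReal ?_
            rw [sq]
            have := pow_le_pow_of_le_one hσ h.lt_one.le hkj
            gcongr
  calc expect a k (greenE a)
      = ∑' j, ∑' x, ENNReal.ofReal (convPow a k x) * ENNReal.ofReal (convPow a j x) := by
        simp_rw [expect, greenE, ← ENNReal.tsum_mul_left]
        exact ENNReal.tsum_comm
    _ ≤ ∑' j, ENNReal.ofReal (σ ^ k * σ ^ j) := ENNReal.tsum_le_tsum key
    _ = _ := by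
        rw [← ENNReal.ofReal_tsum_of_nonneg (fun j => by positivity)
          ((summable_geometric_of_lt_one hσ h.lt_one).mul_left _), tsum_mul_left,
          tsum_geometric_of_lt_one hσ h.lt_one, div_eq_mul_inv]

/-- Linear upper bound for the concave function `u ↦ u ^ δ`; it replaces Jensen's inequality. -/
lemma rpow_le_tangent {u t δ : ℝ} (hu : 0 ≤ u) (ht : 0 < t) (hδ0 : 0 ≤ δ) (hδ1 : δ ≤ 1) :
    u ^ δ ≤ t ^ δ + t ^ (δ - 1) * u := by
  rcases le_total u t with h | h
  · have := Real.rpow_le_rpow hu h hδ0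
    have := mul_nonneg (Real.rpow_nonneg ht.le (δ - 1)) hu
    linarith
  · have hu' := ht.trans_le h
    have h1 : u ^ δ = u ^ (δ - 1) * u := by
      rw [← Real.rpow_add_one hu'.ne']; ring_nf
    have h2 := Real.rpow_le_rpow_of_nonpos ht h (sub_nonpos.2 hδ1)
    have := Real.rpow_nonneg ht.le δ
    rw [h1]
    nlinarith

/-- The Green metric has logarithmic volume growth at most `1`, in the form
`∑ₓ G(x)^(1+δ) = ∑ₖ ∑ₓ aᵏ(x) G(x)^δ < ∞`. -/
lemma SpecBound.tsum_green_rpow_ne_top (h : SpecBound a σ) {δ : ℝ} (hδ0 : 0 < δ) (hδ1 : δ ≤ 1) :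
    ∑' x, ENNReal.ofReal (green a x ^ (1 + δ)) ≠ ⊤ := by
  have hσ := h.pos
  have h1σ : 0 < 1 - σ := sub_pos.2 h.lt_one
  set f : Γ → ℝ≥0∞ := fun x => ENNReal.ofReal (green a x ^ δ)
  have hE : ∀ k, expect a k f ≤ ENNReal.ofReal ((σ ^ δ) ^ k * (1 + 1 / (1 - σ))) := by
    intro k
    -- The linear bound is taken at `t = σᵏ`, the order of magnitude of the mean of `G`.
    have ht : 0 < σ ^ k := pow_pos hσ k
    calc expect a k f
        ≤ expect a k fun x => ENNReal.ofReal ((σ ^ k) ^ δ) +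
            ENNReal.ofReal ((σ ^ k) ^ (δ - 1)) * greenE a x := by
          refine expect_mono k fun x _ => ?_
          rw [h.greenE_eq, ← ENNReal.ofReal_mul (by positivity)]
          exact (ENNReal.ofReal_le_ofReal (rpow_le_tangent (h.green_nonneg x) ht hδ0.le hδ1)).trans
            ENNReal.ofReal_add_le
      _ = ENNReal.ofReal ((σ ^ k) ^ δ) +
            ENNReal.ofReal ((σ ^ k) ^ (δ - 1)) * expect a k (greenE a) := by
          rw [expect_add_fun, expect_const h.prob]
          congr 1
          simp_rw [expect, ← ENNReal.tsum_mul_left]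
          exact tsum_congr fun x => by ring
      _ ≤ ENNReal.ofReal ((σ ^ k) ^ δ) +
            ENNReal.ofReal ((σ ^ k) ^ (δ - 1)) * ENNReal.ofReal (σ ^ k / (1 - σ)) := by
          gcongr; exact h.expect_greenE_le k
      _ = _ := by
          rw [← ENNReal.ofReal_mul (by positivity), ← ENNReal.ofReal_add (by positivity)
            (by positivity)]
          congr 1
          have e1 : (σ ^ δ) ^ k = (σ ^ k) ^ δ := by
            rw [← Real.rpow_natCast, ← Real.rpow_natCast, ← Real.rpow_mul hσ.le,
              ← Real.rpow_mul hσ.le, mul_comm]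
          have e2 : (σ ^ k) ^ (δ - 1) * σ ^ k = (σ ^ k) ^ δ := by
            rw [← Real.rpow_add_one ht.ne']; ring_nf
          rw [e1, mul_div_assoc', e2]; ring
  have hs : ∑' x, ENNReal.ofReal (green a x ^ (1 + δ)) = ∑' k, expect a k f := by
    simp_rw [expect]
    rw [ENNReal.tsum_comm]
    refine tsum_congr fun x => ?_
    rw [ENNReal.tsum_mul_right]
    change _ = greenE a x * _
    rw [h.greenE_eq, ← ENNReal.ofReal_mul (h.green_nonneg x)]
    rcases (h.green_nonneg x).eq_or_lt with h0 | h0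
    · rw [← h0, Real.zero_rpow (by positivity)]; simp
    · rw [Real.rpow_add h0, Real.rpow_one]
  have hlt : σ ^ δ < 1 := Real.rpow_lt_one hσ.le h.lt_one hδ0
  rw [hs]
  refine ne_top_of_le_ne_top ?_ (ENNReal.tsum_le_tsum hE)
  rw [← ENNReal.ofReal_tsum_of_nonneg (fun k => by positivity)
    ((summable_geometric_of_lt_one (by positivity) hlt).mul_right _)]
  exact ENNReal.ofReal_ne_top

end

/-! ### Comparison of convolution powers -/

section
variable {Γ : Type*} [Group Γ]

/-- Cauchy–Schwarz for series. -/
lemma tsum_sq_le {ι : Type*} {u f g : ι → ℝ} (hu : ∀ i, 0 ≤ u i) (hf0 : ∀ i, 0 ≤ f i)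
    (hg0 : ∀ i, 0 ≤ g i) (hf : Summable f) (hg : Summable g)
    (h : ∀ i, u i ^ 2 ≤ f i * g i) : (∑' i, u i) ^ 2 ≤ (∑' i, f i) * ∑' i, g i := by
  have h0 : 0 ≤ (∑' i, f i) * ∑' i, g i := mul_nonneg (tsum_nonneg hf0) (tsum_nonneg hg0)
  rw [← Real.le_sqrt (tsum_nonneg hu) h0]
  refine Real.tsum_le_of_sum_le hu fun s => ?_
  rw [Real.le_sqrt (Finset.sum_nonneg fun i _ => hu i) h0]
  refine (Finset.sum_sq_le_sum_mul_sum_of_sq_le_mul s (fun i _ => hf0 i) (fun i _ => hg0 i)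
    fun i _ => h i).trans ?_
  exact mul_le_mul (hf.sum_le_tsum s fun i _ => hf0 i) (hg.sum_le_tsum s fun i _ => hg0 i)
    (Finset.sum_nonneg fun i _ => hg0 i) (tsum_nonneg hf0)

/-- The interpolation inequality `m² ≤ C a b` passes to convolution powers, with the constant
raised to the number of steps. -/
lemma convPow_sq_le {m a b : Γ → ℝ} (hm : IsProb m) (ha : IsProb a) (hb : IsProb b) {C : ℝ}
    (hC : 0 ≤ C) (h : ∀ x, m x ^ 2 ≤ C * (a x * b x)) (n : ℕ) (x : Γ) :
    convPow m n x ^ 2 ≤ C ^ n * (convPow a n x * convPow b n x) := by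
  induction n generalizing x with
  | zero => simp only [convPow]; split_ifs <;> simp
  | succ n ih =>
    have hm' := (hm.convPow n).nonneg
    have ha' := (ha.convPow n).nonneg
    have hb' := (hb.convPow n).nonneg
    have := tsum_sq_le (u := fun y => convPow m n y * m (y⁻¹ * x))
      (f := fun y => C ^ (n + 1) * (convPow a n y * a (y⁻¹ * x)))
      (g := fun y => convPow b n y * b (y⁻¹ * x))
      (fun y => mul_nonneg (hm' y) (hm.nonneg _))
      (fun y => mul_nonneg (pow_nonneg hC _) (mul_nonneg (ha' y) (ha.nonneg _)))
      (fun y => mul_nonneg (hb' y) (hb.nonneg _))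
      ((summable_conv (ha.convPow n) ha x).mul_left _) (summable_conv (hb.convPow n) hb x)
      (fun y => by
        calc _ = convPow m n y ^ 2 * m (y⁻¹ * x) ^ 2 := by ring
          _ ≤ (C ^ n * (convPow a n y * convPow b n y)) *
              (C * (a (y⁻¹ * x) * b (y⁻¹ * x))) :=
            mul_le_mul (ih y) (h _) (sq_nonneg _)
              (mul_nonneg (pow_nonneg hC _) (mul_nonneg (ha' y) (hb' y)))
          _ = _ := by ring)
    rw [tsum_mul_left] at this
    simpa [convPow, conv, mul_assoc] using this

lemma convPow_le_of_le {m m' : Γ → ℝ} (hm : IsProb m) (hm' : IsProb m') {C : ℝ} (hC : 0 ≤ C)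
    (h : ∀ x, m' x ≤ C * m x) (n : ℕ) (x : Γ) : convPow m' n x ≤ C ^ n * convPow m n x := by
  induction n generalizing x with
  | zero => simp [convPow]
  | succ n ih =>
    simp only [convPow, conv]
    rw [← tsum_mul_left]
    refine (summable_conv (hm'.convPow n) hm' x).tsum_le_tsum (fun y => ?_)
      ((summable_conv (hm.convPow n) hm x).mul_left _)
    calc _ ≤ (C ^ n * convPow m n y) * (C * m (y⁻¹ * x)) :=
          mul_le_mul (ih y) (h _) (hm'.nonneg _)
            (mul_nonneg (pow_nonneg hC _) ((hm.convPow n).nonneg y))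
      _ = _ := by ring

/-! ### Entropy against escape in the Green metric -/

variable {m a b : Γ → ℝ} {σ : ℝ}

lemma momentE_add_le (hm : IsProb m) (ha : SpecBound a σ)
    (hpos : ∀ n x, 0 < convPow m n x → 0 < convPow a n x) (n k : ℕ) :
    momentE (greenDist a) (convPow m (n + k)) ≤
      momentE (greenDist a) (convPow m n) + momentE (greenDist a) (convPow m k) := by
  simp only [momentE_convPow]
  refine expect_subadd hm n k fun x y hx hy => ?_
  exact (ENNReal.ofReal_le_ofReal (ha.greenDist_triangle
    ((hpos n x hx).trans_le (ha.convPow_le_green n x))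
    ((hpos k y hy).trans_le (ha.convPow_le_green k y)))).trans ENNReal.ofReal_add_le

/-- Gibbs' inequality for `mⁿ` against the finite measure `G ^ (1 + δ)`. -/
lemma entropy_le_momentE (hm : IsProb m) (ha : SpecBound a σ)
    (hpos : ∀ n x, 0 < convPow m n x → 0 < convPow a n x) (n : ℕ) {δ : ℝ} (hδ : 0 < δ) :
    entropy (convPow m n) ≤ ENNReal.ofReal (1 + δ) * momentE (greenDist a) (convPow m n) +
      ∑' x, ENNReal.ofReal (green a x ^ (1 + δ)) := by
  rw [entropy, momentE, ← ENNReal.tsum_mul_left, ← ENNReal.tsum_add]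
  refine ENNReal.tsum_le_tsum fun x => ?_
  rcases ((hm.convPow n).nonneg x).eq_or_lt with h0 | h0
  · simp [← h0]
  set p := convPow m n x
  have hd := ha.greenDist_nonneg x
  rw [← ENNReal.ofReal_mul hd, ← ENNReal.ofReal_mul (by positivity),
    ← ENNReal.ofReal_add (by positivity) (Real.rpow_nonneg (ha.green_nonneg x) _)]
  refine ENNReal.ofReal_le_ofReal ?_
  have hG : 0 < green a x := (hpos n x h0).trans_le (ha.convPow_le_green n x)
  have hq : 0 < green a x ^ (1 + δ) := Real.rpow_pos_of_pos hG _
  have h1 := Real.log_le_sub_one_of_pos (div_pos hq h0)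
  rw [Real.log_div hq.ne' h0.ne', Real.log_rpow hG] at h1
  have h2 : Real.log (green a x) = Real.log (green a 1) - greenDist a 1 x := by
    simp [greenDist]
  have h3 := Real.log_nonneg ha.one_le_green
  have h4 := mul_le_mul_of_nonneg_left h1 h0.le
  rw [mul_sub, mul_sub, mul_div_cancel₀ _ h0.ne', h2] at h4
  have h5 : 0 ≤ p * ((1 + δ) * Real.log (green a 1)) := by positivity
  nlinarith

/-- Interpolation: `2 log mⁿ ≤ n c + log aⁿ + log bⁿ`, and `aⁿ`, `bⁿ` are at most the Green
functions. This also provides the finiteness of both Green moments. -/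
lemma momentE_add_momentE_le (hm : IsProb m) (ha : SpecBound a σ) (hb : SpecBound b σ) {c : ℝ}
    (h : ∀ x, m x ^ 2 ≤ Real.exp c * (a x * b x)) (n : ℕ) :
    momentE (greenDist a) (convPow m n) + momentE (greenDist b) (convPow m n) ≤
      ENNReal.ofReal (Real.log (green a 1) + Real.log (green b 1) + n * c) +
        2 * entropy (convPow m n) := by
  rw [two_mul, momentE_convPow, momentE_convPow, entropy_convPow hm, ← expect_add_fun,
    ← expect_add_fun, ← expect_const hm n (ENNReal.ofReal _), ← expect_add_fun]
  refine expect_mono n fun x hx => ?_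
  rw [← ENNReal.ofReal_add (ha.greenDist_nonneg x) (hb.greenDist_nonneg x)]
  refine (ENNReal.ofReal_le_ofReal ?_).trans (ENNReal.ofReal_add_le.trans
    (add_le_add le_rfl ENNReal.ofReal_add_le))
  have h1 := convPow_sq_le hm ha.prob hb.prob (Real.exp_pos c).le h n x
  have h2 := ha.convPow_le_green n x
  have h3 := hb.convPow_le_green n x
  have h4 : convPow m n x ^ 2 ≤ Real.exp (n * c) * (green a x * green b x) := by
    rw [Real.exp_nat_mul]
    refine h1.trans (mul_le_mul_of_nonneg_left ?_ (by positivity))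
    exact mul_le_mul h2 h3 ((hb.prob.convPow n).nonneg x) (ha.green_nonneg x)
  have h5 : 0 < green a x * green b x :=
    pos_of_mul_pos_right ((pow_pos hx 2).trans_le h4) (Real.exp_pos _).le
  have ha0 : green a x ≠ 0 := left_ne_zero_of_mul h5.ne'
  have hb0 : green b x ≠ 0 := right_ne_zero_of_mul h5.ne'
  have h6 := Real.log_le_log (pow_pos hx 2) h4
  rw [Real.log_pow, Real.log_mul (Real.exp_pos _).ne' h5.ne', Real.log_exp,
    Real.log_mul ha0 hb0] at h6
  simp only [greenDist, inv_one, one_mul]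
  push_cast at h6
  linarith

lemma tendsto_entropy (hm : IsProb m) (hent : entropy m ≠ ⊤) :
    Tendsto (fun n : ℕ => (entropy (convPow m n)).toReal / n) atTop (𝓝 (asympEntropy m)) := by
  refine tendsto_iInf_of_subadditive (fun n k => ?_) fun n => ENNReal.toReal_nonneg
  rw [← ENNReal.toReal_add (entropy_ne_top hm hent n) (entropy_ne_top hm hent k)]
  exact ENNReal.toReal_mono (ENNReal.add_ne_top.2 ⟨entropy_ne_top hm hent n,
    entropy_ne_top hm hent k⟩) (entropy_add_le hm n k)

lemma tendsto_escape (hm : IsProb m) (ha : SpecBound a σ)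
    (hpos : ∀ n x, 0 < convPow m n x → 0 < convPow a n x)
    (hfin : ∀ n, momentE (greenDist a) (convPow m n) ≠ ⊤) :
    Tendsto (fun n : ℕ => (momentE (greenDist a) (convPow m n)).toReal / n) atTop
      (𝓝 (escape (greenDist a) m)) := by
  refine tendsto_iInf_of_subadditive (fun n k => ?_) fun n => ENNReal.toReal_nonneg
  rw [← ENNReal.toReal_add (hfin n) (hfin k)]
  exact ENNReal.toReal_mono (ENNReal.add_ne_top.2 ⟨hfin n, hfin k⟩) (momentE_add_le hm ha hpos n k)

/-- The fundamental inequality `h(m) ≤ ℓ(m; d_G)`. The finiteness hypothesis matters, as `escape`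
would otherwise read an infinite moment as `0`. -/
lemma asympEntropy_le_escape (hm : IsProb m) (hent : entropy m ≠ ⊤) (ha : SpecBound a σ)
    (hpos : ∀ n x, 0 < convPow m n x → 0 < convPow a n x)
    (hfin : ∀ n, momentE (greenDist a) (convPow m n) ≠ ⊤) :
    asympEntropy m ≤ escape (greenDist a) m := by
  have key : ∀ δ : ℝ, 0 < δ → δ ≤ 1 → asympEntropy m ≤ (1 + δ) * escape (greenDist a) m := by
    intro δ hδ hδ1
    have hZ := ha.tsum_green_rpow_ne_top hδ hδ1
    set Z := ∑' x, ENNReal.ofReal (green a x ^ (1 + δ))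
    have hlim := ((tendsto_escape hm ha hpos hfin).const_mul (1 + δ)).add
      (tendsto_const_div_atTop_nhds_zero_nat Z.toReal)
    rw [add_zero] at hlim
    refine le_of_tendsto_of_tendsto' (tendsto_entropy hm hent) hlim fun n => ?_
    have h1 := ENNReal.toReal_mono (ENNReal.add_ne_top.2
      ⟨ENNReal.mul_ne_top ENNReal.ofReal_ne_top (hfin n), hZ⟩)
      (entropy_le_momentE hm ha hpos n hδ)
    rw [ENNReal.toReal_add (ENNReal.mul_ne_top ENNReal.ofReal_ne_top (hfin n)) hZ,
      ENNReal.toReal_mul, ENNReal.toReal_ofReal (by positivity)] at h1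
    rw [mul_div_assoc', ← add_div]
    exact div_le_div_of_nonneg_right h1 n.cast_nonneg
  have hlim : Tendsto (fun δ : ℝ => (1 + δ) * escape (greenDist a) m) (𝓝[>] 0)
      (𝓝 ((1 + 0) * escape (greenDist a) m)) :=
    (Continuous.tendsto (by fun_prop) 0).mono_left nhdsWithin_le_nhds
  rw [add_zero, one_mul] at hlim
  refine ge_of_tendsto hlim ?_
  filter_upwards [Ioc_mem_nhdsGT (zero_lt_one (α := ℝ))] with δ hδ using key δ hδ.1 hδ.2

/-- If `m² ≤ eᶜ a b`, then `h(m)` and `ℓ(m; d_G^a)` differ by at most `c`: interpolation gives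
`ℓ_a + ℓ_b ≤ 2 h + c`, while `h ≤ ℓ_a` and `h ≤ ℓ_b` by the fundamental inequality. -/
theorem abs_asympEntropy_sub_escape_le (hm : IsProb m) (hent : entropy m ≠ ⊤)
    (ha : SpecBound a σ) (hb : SpecBound b σ) {c : ℝ} (hc : 0 ≤ c)
    (h : ∀ x, m x ^ 2 ≤ Real.exp c * (a x * b x)) :
    |asympEntropy m - escape (greenDist a) m| ≤ c := by
  have hab : ∀ n x, 0 < convPow m n x → 0 < convPow a n x * convPow b n x := fun n x hx =>
    pos_of_mul_pos_right ((pow_pos hx 2).trans_le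
      (convPow_sq_le hm ha.prob hb.prob (Real.exp_pos c).le h n x)) (by positivity)
  have hposa : ∀ n x, 0 < convPow m n x → 0 < convPow a n x := fun n x hx =>
    pos_of_mul_pos_left (hab n x hx) ((hb.prob.convPow n).nonneg x)
  have hposb : ∀ n x, 0 < convPow m n x → 0 < convPow b n x := fun n x hx =>
    pos_of_mul_pos_right (hab n x hx) ((ha.prob.convPow n).nonneg x)
  have hsum := momentE_add_momentE_le hm ha hb h
  have hR : ∀ n : ℕ, ENNReal.ofReal (Real.log (green a 1) + Real.log (green b 1) + n * c) +
        2 * entropy (convPow m n) ≠ ⊤ := fun n =>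
    ENNReal.add_ne_top.2 ⟨ENNReal.ofReal_ne_top,
      ENNReal.mul_ne_top (by simp) (entropy_ne_top hm hent n)⟩
  have hfina : ∀ n, momentE (greenDist a) (convPow m n) ≠ ⊤ := fun n =>
    ne_top_of_le_ne_top (hR n) (le_self_add.trans (hsum n))
  have hfinb : ∀ n, momentE (greenDist b) (convPow m n) ≠ ⊤ := fun n =>
    ne_top_of_le_ne_top (hR n) (le_add_self.trans (hsum n))
  have h1 := asympEntropy_le_escape hm hent ha hposa hfina
  have h2 := asympEntropy_le_escape hm hent hb hposb hfinb
  have h3 : escape (greenDist a) m + escape (greenDist b) m ≤ c + 2 * asympEntropy m := by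
    have hl := (tendsto_escape hm ha hposa hfina).add (tendsto_escape hm hb hposb hfinb)
    have hr := ((tendsto_const_div_atTop_nhds_zero_nat
      (Real.log (green a 1) + Real.log (green b 1))).add_const c).add
      ((tendsto_entropy hm hent).const_mul 2)
    rw [zero_add] at hr
    refine le_of_tendsto_of_tendsto hl hr ?_
    filter_upwards [eventually_gt_atTop 0] with n hn
    have hn' : (0 : ℝ) < n := Nat.cast_pos.2 hn
    have h0a := Real.log_nonneg ha.one_le_green
    have h0b := Real.log_nonneg hb.one_le_green
    have h4 := ENNReal.toReal_mono (hR n) (hsum n)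
    rw [ENNReal.toReal_add (hfina n) (hfinb n), ENNReal.toReal_add ENNReal.ofReal_ne_top
      (ENNReal.mul_ne_top (by simp) (entropy_ne_top hm hent n)), ENNReal.toReal_mul,
      ENNReal.toReal_ofReal (by positivity), ENNReal.toReal_ofNat] at h4
    rw [← add_div, div_le_iff₀ hn']
    refine h4.trans (le_of_eq ?_)
    field_simp
  rw [abs_le]
  constructor <;> linarith

/-- Finiteness of entropy is stable under a density bounded above and below. -/
lemma entropy_ne_top_of_eq_mul_exp {ι : Type*} {p q g : ι → ℝ} (hp : IsProb p) (hent : entropy p ≠ ⊤)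
    {K : ℝ} (hg : ∀ x, p x ≠ 0 → |g x| ≤ K) (hK : 0 ≤ K)
    (hq : ∀ x, q x = p x * Real.exp (g x)) : entropy q ≠ ⊤ := by
  have hle : entropy q ≤ ENNReal.ofReal (Real.exp K) * (entropy p + ENNReal.ofReal K * 1) := by
    rw [← hp.tsum_ofReal, entropy, entropy, ← ENNReal.tsum_mul_left, ← ENNReal.tsum_add,
      ← ENNReal.tsum_mul_left]
    refine ENNReal.tsum_le_tsum fun x => ?_
    rcases (hp.nonneg x).eq_or_lt with h0 | h0
    · simp [hq, ← h0]
    have hlog : 0 ≤ -Real.log (p x) := neg_nonneg.2 (Real.log_nonpos h0.le (hp.le_one x))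
    have hgx := abs_le.1 (hg x h0.ne')
    rw [← ENNReal.ofReal_mul hK, ← ENNReal.ofReal_add (by positivity) (by positivity),
      ← ENNReal.ofReal_mul (Real.exp_pos K).le]
    refine ENNReal.ofReal_le_ofReal ?_
    rw [hq, Real.log_mul h0.ne' (Real.exp_pos _).ne', Real.log_exp]
    calc -(Real.log (p x) + g x) * (p x * Real.exp (g x))
        ≤ (-Real.log (p x) + K) * (p x * Real.exp K) := by
          refine mul_le_mul (by linarith) ?_ (by positivity) (by positivity)
          exact mul_le_mul_of_nonneg_left (Real.exp_le_exp.2 hgx.2) h0.le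
      _ = _ := by ring
  refine ne_top_of_le_ne_top ?_ hle
  exact ENNReal.mul_ne_top ENNReal.ofReal_ne_top (ENNReal.add_ne_top.2
    ⟨hent, by rw [mul_one]; exact ENNReal.ofReal_ne_top⟩)

end

end GreenEntropy

/-- on a non-amenable finitely generated group, along a regular curve
`λ ↦ μ_λ` of probability measures with `μ_0` of finite entropy and generating support, and
with rates of escape in the Green metrics uniformly bounded, the entropy and the rate of
escape in the Green metric `d_G^0` of `μ_0` agree to first order:
`(1/λ)(h(μ_λ) − ℓ(μ_λ; d_G^0)) → 0` as `λ → 0+`. -/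
theorem entropy_minus_green_escape_o_of_lambda {Γ : Type*} [Group Γ] [Countable Γ]
    (hfg : ∃ S : Finset Γ, Subgroup.closure (S : Set Γ) = ⊤)
    (μ : ℝ → Γ → ℝ) (ν : Γ → ℝ) (o : ℝ → Γ → ℝ)
    (hpos : ∀ (l : ℝ) (x : Γ), 0 ≤ μ l x)
    (hprob : ∀ l : ℝ, HasSum (μ l) 1)
    (hgen : Submonoid.closure (Function.support (μ 0)) = ⊤)
    (hent : entropy (μ 0) ≠ ⊤)
    (hsupp : ∀ (l : ℝ) (x : Γ), μ l x = 0 ↔ μ 0 x = 0)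
    (hexp : ∀ (l : ℝ) (x : Γ), μ 0 x ≠ 0 →
      Real.log (μ l x) = Real.log (μ 0 x) + l * ν x + l * o l x)
    (hν : ∃ B : ℝ, ∀ x, |ν x| ≤ B)
    (ho : ∀ ε : ℝ, 0 < ε → ∃ δ : ℝ, 0 < δ ∧ ∀ (l : ℝ) (x : Γ), l ≠ 0 → |l| ≤ δ → |o l x| ≤ ε)
    (ρ : ℝ) (hρ0 : 0 ≤ ρ) (hρ1 : ρ < 1)
    (hspec : ∀ (n : ℕ) (x : Γ), convPow (μ 0) n x ≤ ρ ^ n)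
    (L : ℝ)
    (hL : ∀ l α : ℝ, l ∈ Set.Icc (0 : ℝ) 1 → α ∈ Set.Icc (0 : ℝ) 1 →
      escape (greenDist (μ α)) (μ l) ≤ L) :
    Tendsto (fun l : ℝ => (1 / l) * (asympEntropy (μ l) - escape (greenDist (μ 0)) (μ l)))
      (𝓝[>] 0) (𝓝 0) := by
  have hP : ∀ l, GreenEntropy.IsProb (μ l) := fun l => ⟨hpos l, hprob l⟩
  obtain ⟨B, hB⟩ := hν
  have hB0 : 0 ≤ B := (abs_nonneg _).trans (hB 1)
  have hμ : ∀ l x, μ l x = μ 0 x * Real.exp (l * (ν x + o l x)) := by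
    intro l x
    by_cases h0 : μ 0 x = 0
    · rw [h0, zero_mul]; exact (hsupp l x).2 h0
    · have hl0 : 0 < μ l x := (hpos l x).lt_of_ne' fun h => h0 ((hsupp l x).1 h)
      have h00 : 0 < μ 0 x := (hpos 0 x).lt_of_ne' h0
      rw [← Real.exp_log hl0, hexp l x h0, add_assoc, ← mul_add, Real.exp_add, Real.exp_log h00]
  -- An exponential rate strictly between `ρ` and `1`, shared by `μ 0` and `μ (2 * l)`.
  set s : ℝ := (1 + ρ) / 2 with hs
  have hs0 : 0 < s := by positivity
  have hs1 : s < 1 := by rw [hs]; linarith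
  have hρs : ρ < s := by rw [hs]; linarith
  have hσ : ∀ n : ℕ, s ^ n = (√s ^ n) ^ 2 := fun n => by
    rw [← pow_mul, mul_comm, pow_mul, Real.sq_sqrt hs0.le]
  have hσ1 : √s < 1 := by rw [Real.sqrt_lt' one_pos]; simpa using hs1
  have ha : GreenEntropy.SpecBound (μ 0) √s :=
    ⟨hP 0, Real.sqrt_pos.2 hs0, hσ1, fun n x => (hspec n x).trans
      ((pow_le_pow_left₀ hρ0 hρs.le n).trans (hσ n).le)⟩
  have hexpρ : ∀ᶠ l : ℝ in 𝓝[>] 0, Real.exp (2 * l * (B + 1)) * ρ < s := by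
    have : Tendsto (fun l : ℝ => Real.exp (2 * l * (B + 1)) * ρ) (𝓝[>] 0)
        (𝓝 (Real.exp (2 * 0 * (B + 1)) * ρ)) :=
      (Continuous.tendsto (by fun_prop) 0).mono_left nhdsWithin_le_nhds
    refine this.eventually_lt_const ?_
    simpa using hρs
  rw [Metric.tendsto_nhds]
  intro ε hε
  obtain ⟨δ₁, hδ₁, ho₁⟩ := ho 1 one_pos
  obtain ⟨δ, hδ, ho'⟩ := ho (ε / 8) (by positivity)
  filter_upwards [hexpρ, Ioc_mem_nhdsGT (half_pos hδ₁), Ioc_mem_nhdsGT (half_pos hδ)]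
    with l hl hl1 hl2
  have hl0 : 0 < l := hl1.1
  have hb1 : ∀ t, 0 < t → t ≤ 2 * l → ∀ x, |t * (ν x + o t x)| ≤ t * (B + 1) := by
    intro t ht htl x
    rw [abs_mul, abs_of_pos ht]
    refine mul_le_mul_of_nonneg_left ((abs_add_le _ _).trans (add_le_add (hB x) ?_)) ht.le
    exact ho₁ t x ht.ne' (by rw [abs_of_pos ht]; linarith [hl1.2])
  have hb : GreenEntropy.SpecBound (μ (2 * l)) √s := by
    refine ⟨hP _, Real.sqrt_pos.2 hs0, hσ1, fun n x => ?_⟩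
    have h1 := GreenEntropy.convPow_le_of_le (hP 0) (hP (2 * l))
      (Real.exp_pos (2 * l * (B + 1))).le (fun x => by
        rw [hμ, mul_comm]
        exact mul_le_mul_of_nonneg_right (Real.exp_le_exp.2
          (abs_le.1 (hb1 (2 * l) (by positivity) le_rfl x)).2) (hpos 0 x)) n x
    calc _ ≤ _ := h1
      _ ≤ Real.exp (2 * l * (B + 1)) ^ n * ρ ^ n :=
          mul_le_mul_of_nonneg_left (hspec n x) (by positivity)
      _ = (Real.exp (2 * l * (B + 1)) * ρ) ^ n := (mul_pow _ _ _).symm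
      _ ≤ s ^ n := pow_le_pow_left₀ (by positivity) hl.le n
      _ = _ := hσ n
  have hentl : entropy (μ l) ≠ ⊤ :=
    GreenEntropy.entropy_ne_top_of_eq_mul_exp (hP 0) hent
      (fun x _ => hb1 l hl0 (by linarith) x) (by positivity) (hμ l)
  -- The first-order terms `l ν` cancel because `l` is the midpoint of `0` and `2 l`.
  have hint : ∀ x, μ l x ^ 2 ≤ Real.exp (l * (ε / 2)) * (μ 0 x * μ (2 * l) x) := by
    intro x
    have e1 := abs_le.1 (ho' l x hl0.ne' (by rw [abs_of_pos hl0]; linarith [hl2.2]))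
    have e2 := abs_le.1 (ho' (2 * l) x (by positivity)
      (by rw [abs_of_pos (by positivity)]; linarith [hl2.2]))
    rw [hμ l, hμ (2 * l), mul_pow, ← Real.exp_nat_mul]
    have e3 : ((2 : ℕ) : ℝ) * (l * (ν x + o l x)) ≤
        l * (ε / 2) + 2 * l * (ν x + o (2 * l) x) := by
      push_cast
      nlinarith
    calc _ ≤ μ 0 x ^ 2 * Real.exp (l * (ε / 2) + 2 * l * (ν x + o (2 * l) x)) :=
          mul_le_mul_of_nonneg_left (Real.exp_le_exp.2 e3) (sq_nonneg _)
      _ = _ := by rw [Real.exp_add]; ring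
  have hmain := GreenEntropy.abs_asympEntropy_sub_escape_le (hP l) hentl ha hb
    (by positivity) hint
  rw [Real.dist_eq, sub_zero, abs_mul, abs_of_pos (by positivity : 0 < 1 / l), one_div,
    inv_mul_lt_iff₀ hl0]
  refine hmain.trans_lt ?_
  nlinarith [mul_pos hl0 hε]
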